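/- The symmetric group S_n, partially ordered by absolute order (equivalently, by refinement), is Sperner: every antichain A in (S_n, ≤_T) satisfies |A| ≤ max over k of s(n, k), the largest unsigned Stirling number of the first kind; that is, no antichain is larger than the largest level. -/

import Mathlib

/-- The number of cycles of a permutation of `{1,…,n}` (here `Fin n`),
counting fixed points as cycles of length one. -/
def cycleCount {n : ℕ} (π : Equiv.Perm (Fin n)) : ℕ :=
  π.cycleType.card + (Finset.univ.filter fun x => π x = x).card

/-- The absolute length `ℓ_T(π) = n - c(π)`. -/
def absLength {n : ℕ} (π : Equiv.Perm (Fin n)) : ℕ :=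
  n - cycleCount π

/-- The absolute order on `S_n`: `σ ≤_T π` iff `ℓ_T(π) = ℓ_T(σ) + ℓ_T(σ⁻¹ π)`. -/
def absLe {n : ℕ} (σ π : Equiv.Perm (Fin n)) : Prop :=
  absLength π = absLength σ + absLength (σ⁻¹ * π)

/-- The unsigned Stirling number of the first kind `s(n,k)`: the number of
permutations of an `n`-element set with exactly `k` cycles (fixed points
counting as cycles of length one). -/
def stirlingFirst (n k : ℕ) : ℕ :=
  (Finset.univ.filter fun π : Equiv.Perm (Fin n) => cycleCount π = k).card


open Equiv Equiv.Perm in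
theorem card_le_sum_cycleType {α : Type*} [Fintype α] [DecidableEq α] (f : Perm α) :
    f.cycleType.card ≤ f.cycleType.sum := by
  have := Multiset.card_nsmul_le_sum (s := f.cycleType) (a := 1)
    (fun x hx => le_trans (by norm_num) (two_le_of_mem_cycleType hx))
  simpa using this

open Equiv Equiv.Perm in
theorem cycleCount_add_sum {n : ℕ} (f : Perm (Fin n)) :
    cycleCount f + f.cycleType.sum = f.cycleType.card + n := by
  have h1 := sum_cycleType f
  have h2 : (Finset.univ.filter fun x => f x = x).card + f.support.card = n := by
    have := Finset.card_filter_add_card_filter_not (s := (Finset.univ : Finset (Fin n)))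
      (fun x => f x = x)
    rw [Finset.card_univ, Fintype.card_fin] at this
    convert this using 2
    congr 1
  unfold cycleCount
  omega

open Equiv Equiv.Perm in
theorem absLength_add_card {n : ℕ} (f : Perm (Fin n)) :
    absLength f + f.cycleType.card = f.cycleType.sum := by
  have h1 := cycleCount_add_sum f
  have h2 := card_le_sum_cycleType f
  unfold absLength
  omega

open Equiv Equiv.Perm in
theorem cycleCount_add_absLength {n : ℕ} (f : Perm (Fin n)) :
    cycleCount f + absLength f = n := by
  have h1 := cycleCount_add_sum f
  have h2 := card_le_sum_cycleType f
  unfold absLength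
  omega

open Equiv Equiv.Perm in
theorem cycleType_swap_mul_fixed {α : Type*} [Fintype α] [DecidableEq α] (f : Perm α) (x y : α)
    (hx : f x = x) (hxy : x ≠ y) :
    (swap x y * f).cycleType.sum + f.cycleType.card
      = f.cycleType.sum + (swap x y * f).cycleType.card + 1 := by
  by_cases hy : f y = y
  · have hd : Disjoint (swap x y) f := by
      intro z
      by_cases h1 : z = x
      · right; rw [h1, hx]
      by_cases h2 : z = y
      · right; rw [h2, hy]
      left; exact swap_apply_of_ne_of_ne h1 h2
    rw [hd.cycleType_mul, (isCycle_swap hxy).cycleType, card_support_swap hxy]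
    simp
    omega
  · have hys : y ∈ f.support := by simpa using hy
    set c := f.cycleOf y with hc
    have hmem : c ∈ f.cycleFactorsFinset := cycleOf_mem_cycleFactorsFinset_iff.mpr hys
    have hd := disjoint_mul_inv_of_mem_cycleFactorsFinset hmem
    set g := f * c⁻¹ with hg
    have hf : f = c * g := by rw [← hd.commute.eq, hg]; group
    have hcx : c x = x := by
      rw [hc]
      apply cycleOf_apply_of_not_sameCycle
      intro h
      exact hy (h.apply_eq_self_iff.mpr hx)
    have hgx : g x = x := by
      have : c⁻¹ x = x := by rw [inv_eq_iff_eq]; exact hcx.symm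
      rw [hg, mul_apply, this, hx]
    obtain ⟨l, hl⟩ : ∃ l, toList f y = y :: l := by
      have h0 := toList_getElem_zero f y hys
      have hpos := length_toList_pos_of_mem_support f y hys
      cases h : toList f y with
      | nil => simp [h] at hpos
      | cons a l => simp only [h, List.getElem_cons_zero] at h0; exact ⟨l, by rw [h0]⟩
    have hnd : (y :: l).Nodup := hl ▸ nodup_toList f y
    have hlen : 2 ≤ (y :: l).length := hl ▸ two_le_length_toList_iff_mem_support.mpr hys
    have hxl : x ∉ y :: l := by
      rw [← hl, mem_toList_iff]
      rintro ⟨h, -⟩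
      exact hy (h.apply_eq_self_iff.mpr hx)
    have hcf : c = (y :: l).formPerm := by rw [hc, ← formPerm_toList, hl]
    have hdf : swap x y * c = (x :: y :: l).formPerm := by
      rw [List.formPerm_cons_cons, hcf]
    have hnd2 : (x :: y :: l).Nodup := List.nodup_cons.mpr ⟨hxl, hnd⟩
    have hct : ∀ m : List α, m.Nodup → 2 ≤ m.length → m.formPerm.cycleType = {m.length} := by
      intro m hm h2
      rw [(List.isCycle_formPerm hm h2).cycleType, List.support_formPerm_of_nodup m hm,
        List.toFinset_card_of_nodup hm]
      rintro z rfl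
      simp at h2
    have hd2 : Disjoint (swap x y * c) g := by
      intro z
      by_cases h1 : z = x
      · right; rw [h1, hgx]
      rcases hd z with h | h
      · right; exact h
      · by_cases h2 : z = y
        · exfalso; rw [h2, hc, cycleOf_apply_self] at h; exact hy h
        · left; rw [mul_apply, h, swap_apply_of_ne_of_ne h1 h2]
    have e1 : f.cycleType = c.cycleType + g.cycleType := by
      conv_lhs => rw [hf]
      exact hd.symm.cycleType_mul
    have e2 : (swap x y * f).cycleType = (swap x y * c).cycleType + g.cycleType := by
      conv_lhs => rw [hf, ← mul_assoc]
      exact hd2.cycleType_mul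
    rw [e1, e2, hdf, hcf, hct _ hnd hlen, hct _ hnd2 (by simp)]
    simp
    omega

open Equiv Equiv.Perm in
theorem decomposeFin_symm_eq {n : ℕ} (p : Fin (n + 1)) (e : Perm (Fin n)) :
    decomposeFin.symm (p, e) = swap 0 p * decomposeFin.symm (0, e) := by
  ext x
  refine Fin.cases ?_ (fun i => ?_) x <;> simp

open Equiv Equiv.Perm in
theorem cycleType_decomposeFin_zero {n : ℕ} (e : Perm (Fin n)) :
    (decomposeFin.symm (0, e)).cycleType = e.cycleType := by
  rw [← cycleType_extendDomain (finSuccAboveEquiv (0 : Fin (n + 1))) (g := e)]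
  congr 1
  apply Equiv.ext
  intro x
  refine Fin.cases ?_ (fun i => ?_) x
  · rw [extendDomain_apply_not_subtype]
    · simp
    · simp
  · have := extendDomain_apply_image e (finSuccAboveEquiv (0 : Fin (n + 1))) i
    simp only [finSuccAboveEquiv_apply, Fin.zero_succAbove] at this
    rw [this]
    simp

open Equiv Equiv.Perm in
theorem absLength_zero {n : ℕ} (e : Perm (Fin n)) :
    absLength (decomposeFin.symm (0, e)) = absLength e := by
  have h1 := absLength_add_card (decomposeFin.symm (0, e))
  have h2 := absLength_add_card e
  rw [cycleType_decomposeFin_zero] at h1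
  omega

open Equiv Equiv.Perm in
theorem absLength_nonzero {n : ℕ} (p : Fin (n + 1)) (hp : p ≠ 0) (e : Perm (Fin n)) :
    absLength (decomposeFin.symm (p, e)) = absLength e + 1 := by
  have h1 := absLength_add_card (decomposeFin.symm (p, e))
  have h2 := absLength_add_card e
  have h3 := cycleType_swap_mul_fixed (decomposeFin.symm (0, e)) 0 p (by simp) hp.symm
  rw [← decomposeFin_symm_eq, cycleType_decomposeFin_zero] at h3
  omega

open Equiv Equiv.Perm in
/-- The order of a product of claws, transported to permutations. -/
def prodLe : (n : ℕ) → Perm (Fin n) → Perm (Fin n) → Prop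
  | 0, _, _ => True
  | n + 1, σ, π => ((decomposeFin σ).1 = 0 ∨ (decomposeFin σ).1 = (decomposeFin π).1) ∧
      prodLe n (decomposeFin σ).2 (decomposeFin π).2

theorem prodLe_refl (n : ℕ) (σ : Equiv.Perm (Fin n)) : prodLe n σ σ := by
  induction n with
  | zero => trivial
  | succ n ih => exact ⟨Or.inr rfl, ih _⟩

theorem prodLe_trans (n : ℕ) (σ τ π : Equiv.Perm (Fin n)) (h1 : prodLe n σ τ)
    (h2 : prodLe n τ π) : prodLe n σ π := by
  induction n with
  | zero => trivial
  | succ n ih =>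
    refine ⟨?_, ih _ _ _ h1.2 h2.2⟩
    rcases h1.1 with h | h
    · exact Or.inl h
    · rw [h]; exact h2.1

open Equiv Equiv.Perm in
theorem decomposeFin_inv_mul {n : ℕ} (e e' : Perm (Fin n)) (p : Fin (n + 1)) :
    (decomposeFin.symm (0, e))⁻¹ * decomposeFin.symm (p, e') =
      decomposeFin.symm ((decomposeFin.symm (0, e))⁻¹ p, e⁻¹ * e') := by
  have key : decomposeFin.symm (0, e') =
      decomposeFin.symm (0, e) * decomposeFin.symm (0, e⁻¹ * e') := by
    ext x
    refine Fin.cases ?_ (fun i => ?_) x <;> simp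
  set g := decomposeFin.symm (0, e) with hg
  have hg0 : g 0 = 0 := by simp [hg]
  rw [decomposeFin_symm_eq p e', decomposeFin_symm_eq _ (e⁻¹ * e'), key]
  rw [inv_mul_eq_iff_eq_mul, ← mul_assoc, ← mul_assoc, mul_swap_eq_swap_mul, hg0]
  simp

open Equiv Equiv.Perm in
theorem absLe_of_prodLe (n : ℕ) (σ π : Perm (Fin n)) (h : prodLe n σ π) : absLe σ π := by
  induction n with
  | zero =>
    have h1 : ∀ x : Perm (Fin 0), absLength x = 0 := fun x => by unfold absLength; omega
    simp [absLe, h1]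
  | succ n ih =>
    obtain ⟨⟨p, e⟩, rfl⟩ := decomposeFin.symm.surjective σ
    obtain ⟨⟨q, e'⟩, rfl⟩ := decomposeFin.symm.surjective π
    simp only [prodLe, Equiv.apply_symm_apply] at h
    obtain ⟨h1, h2⟩ := h
    have h2 := ih _ _ h2
    unfold absLe at *
    have hz : ∀ q : Fin (n+1), q ≠ 0 → absLength ((decomposeFin.symm (0, e))⁻¹ * decomposeFin.symm (q, e'))
        = absLength (e⁻¹ * e') + 1 := by
      intro q hq
      rw [decomposeFin_inv_mul, absLength_nonzero]
      rw [Ne, inv_eq_iff_eq]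
      simpa using hq
    have hz0 : absLength ((decomposeFin.symm (0, e))⁻¹ * decomposeFin.symm (0, e'))
        = absLength (e⁻¹ * e') := by
      rw [decomposeFin_inv_mul]
      have : (decomposeFin.symm (0, e))⁻¹ 0 = 0 := by rw [inv_eq_iff_eq]; simp
      rw [this, absLength_zero]
    by_cases hp : p = 0
    · subst hp
      by_cases hq : q = 0
      · subst hq
        rw [hz0, absLength_zero, absLength_zero, h2]
      · rw [hz q hq, absLength_zero, absLength_nonzero _ hq, h2]; omega
    · have hpq : p = q := by tauto
      subst hpq
      have : (decomposeFin.symm (p, e))⁻¹ * decomposeFin.symm (p, e') =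
          (decomposeFin.symm (0, e))⁻¹ * decomposeFin.symm (0, e') := by
        rw [decomposeFin_symm_eq p e, decomposeFin_symm_eq p e']
        group
      rw [this, hz0, absLength_nonzero _ hp, absLength_nonzero _ hp, h2]; omega

/-- Rank numbers of the symmetric group. -/
def rk : ℕ → ℕ → ℚ
  | 0, 0 => 1
  | 0, _ + 1 => 0
  | n + 1, 0 => rk n 0
  | n + 1, k + 1 => rk n (k + 1) + n * rk n k

theorem rk_nonneg (n k : ℕ) : 0 ≤ rk n k := by
  induction n generalizing k with
  | zero => cases k <;> simp [rk]
  | succ n ih =>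
    cases k with
    | zero => exact ih 0
    | succ k =>
      have := ih (k+1)
      have := ih k
      rw [rk]; positivity

theorem rk_zero (n : ℕ) : rk n 0 = 1 := by
  induction n with
  | zero => rfl
  | succ n ih => exact ih

theorem rk_pos (n k : ℕ) (h : k < n) : 0 < rk n k := by
  induction n generalizing k with
  | zero => omega
  | succ n ih =>
    cases k with
    | zero => rw [rk_zero]; norm_num
    | succ k =>
      have h1 := rk_nonneg n (k+1)
      have h2 := ih k (by omega)
      have h3 : (0 : ℚ) < n := by exact_mod_cast (by omega : 0 < n)
      rw [rk]; positivity

theorem rk_eq_zero (n k : ℕ) (h : n ≤ k + 1) : rk n (k + 1) = 0 := by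
  induction n generalizing k with
  | zero => rfl
  | succ n ih =>
    rw [rk, ih k (by omega)]
    cases k with
    | zero => have : n = 0 := by omega
              subst this; simp
    | succ k => rw [ih k (by omega)]; simp

theorem rk_logconcave (n k : ℕ) : rk n k * rk n (k + 2) ≤ rk n (k + 1) ^ 2 := by
  induction n generalizing k with
  | zero => simp [rk]
  | succ n ih =>
    have hm : (0 : ℚ) ≤ n := by positivity
    cases k with
    | zero =>
      have h := ih 0
      have h0 := rk_nonneg n 0
      have h1 := rk_nonneg n 1
      simp only [rk, zero_add] at *
      have := mul_nonneg hm (mul_nonneg h0 h1)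
      have := mul_nonneg hm h0
      nlinarith [sq_nonneg (n * rk n 0)]
    | succ k =>
      have ha := ih k
      have hb := ih (k + 1)
      simp only [rk, add_assoc, Nat.reduceAdd] at *
      have h0 := rk_nonneg n k
      have h1 := rk_nonneg n (k + 1)
      have h2 := rk_nonneg n (k + 2)
      have h3 := rk_nonneg n (k + 3)
      have hc : rk n k * rk n (k + 3) ≤ rk n (k + 1) * rk n (k + 2) := by
        by_cases hn : n ≤ k + 3
        · rw [rk_eq_zero n (k + 2) hn, mul_zero]; positivity
        · have p1 := rk_pos n (k + 1) (by omega)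
          have p2 := rk_pos n (k + 2) (by omega)
          have := mul_le_mul ha hb (by positivity) (by positivity)
          have hp : 0 < rk n (k + 1) * rk n (k + 2) := by positivity
          by_contra hcon
          push Not at hcon
          nlinarith [mul_lt_mul_of_pos_left hcon hp]
      have e1 := mul_le_mul_of_nonneg_left hc hm
      have e2 := mul_le_mul_of_nonneg_left ha (mul_nonneg hm hm)
      nlinarith

open Equiv Equiv.Perm in
theorem rk_eq_sum (n k : ℕ) :
    rk n k = ∑ π : Perm (Fin n), if absLength π = k then (1 : ℚ) else 0 := by
  induction n generalizing k with
  | zero =>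
    have h1 : ∀ x : Perm (Fin 0), absLength x = 0 := fun x => by unfold absLength; omega
    cases k <;> simp [rk, h1]
  | succ n ih =>
    rw [← Equiv.sum_comp decomposeFin.symm, Fintype.sum_prod_type, Fin.sum_univ_succ]
    simp only [absLength_zero, absLength_nonzero _ (Fin.succ_ne_zero _)]
    cases k with
    | zero => simp [rk, ih]
    | succ k => simp [rk, ih]

theorem card_level (n k : ℕ) :
    ((Finset.univ.filter fun π : Equiv.Perm (Fin n) => absLength π = k).card : ℚ) = rk n k := by
  rw [rk_eq_sum]; simp

theorem absLength_lt (n : ℕ) (π : Equiv.Perm (Fin n)) : absLength π = 0 ∨ absLength π < n := by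
  by_contra h
  push Not at h
  obtain ⟨h0, h1⟩ := h
  obtain ⟨k, hk⟩ := Nat.exists_eq_succ_of_ne_zero h0
  have := card_level n (k + 1)
  rw [rk_eq_zero n k (by omega)] at this
  norm_cast at this
  rw [Finset.card_eq_zero] at this
  have h2 : π ∈ (Finset.univ.filter fun π : Equiv.Perm (Fin n) => absLength π = k + 1) := by
    simp [hk]
  rw [this] at h2
  simp at h2

theorem rk_absLength_pos (n : ℕ) (π : Equiv.Perm (Fin n)) : 0 < rk n (absLength π) := by
  rcases absLength_lt n π with h | h
  · rw [h, rk_zero]; norm_num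
  · exact rk_pos _ _ h

/-- Vertical coefficient of the product flow. -/
def alphaCoef (n : ℕ) : ℕ → ℚ
  | 0 => 1 / rk (n + 1) 1
  | k + 1 => 1 / rk (n + 1) (k + 2) - rk n k / (rk n (k + 1) * rk (n + 1) (k + 1))

theorem alphaCoef_nonneg (n k : ℕ) (h : k = 0 ∨ k < n) : 0 ≤ alphaCoef n k := by
  cases k with
  | zero => exact div_nonneg zero_le_one (rk_nonneg _ _)
  | succ k =>
    have hk : k + 1 < n := by omega
    have h1 := rk_pos n (k + 1) hk
    have h2 := rk_pos (n + 1) (k + 1) (by omega)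
    have h3 := rk_pos (n + 1) (k + 2) (by omega)
    have h4 := rk_logconcave n k
    rw [alphaCoef, sub_nonneg, div_le_div_iff₀ (by positivity) h3]
    simp only [rk]
    nlinarith

/-- A normalized flow on the symmetric group. -/
structure IsFlow (n : ℕ) (w : Equiv.Perm (Fin n) → Equiv.Perm (Fin n) → ℚ) : Prop where
  nonneg : ∀ x y, 0 ≤ w x y
  supp : ∀ x y, w x y ≠ 0 → prodLe n x y ∧ absLength y = absLength x + 1
  row : ∀ x, absLength x + 1 < n → ∑ y, w x y = 1 / rk n (absLength x)
  col : ∀ y, absLength y ≠ 0 → ∑ x, w x y = 1 / rk n (absLength y)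

open Equiv Equiv.Perm in
/-- The product flow in coordinates. -/
def stepFlow (n : ℕ) (w : Perm (Fin n) → Perm (Fin n) → ℚ)
    (x y : Fin (n + 1) × Perm (Fin n)) : ℚ :=
  if x.1 = y.1 then
    (if x.1 = 0 then rk n (absLength x.2 + 1) / rk (n + 1) (absLength x.2 + 1)
      else rk n (absLength x.2) / rk (n + 1) (absLength x.2 + 1)) * w x.2 y.2
  else if x.1 = 0 then (if x.2 = y.2 then alphaCoef n (absLength x.2) else 0) else 0

theorem alpha_row (n k : ℕ) (hk : k < n) :
    rk n (k + 1) / rk (n + 1) (k + 1) * (1 / rk n k) + n * alphaCoef n k = 1 / rk (n + 1) k := by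
  have h0 := rk_pos n k hk
  have h2 := rk_pos (n + 1) (k + 1) (by omega)
  have h3 := rk_pos (n + 1) k (by omega)
  cases k with
  | zero =>
    simp only [alphaCoef]
    have e1 : rk (n + 1) 1 = rk n 1 + n * rk n 0 := rfl
    have e2 : rk (n + 1) 0 = 1 := rk_zero _
    have e3 : rk n 0 = 1 := rk_zero _
    simp only [zero_add] at *
    rw [e2, e3]
    field_simp
    rw [e1, e3]; ring
  | succ k =>
    simp only [alphaCoef]
    have e1 : rk (n + 1) (k + 2) = rk n (k + 2) + n * rk n (k + 1) := rfl
    have e2 : rk (n + 1) (k + 1) = rk n (k + 1) + n * rk n k := rfl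
    simp only [add_assoc, Nat.reduceAdd] at *
    field_simp
    rw [e1, e2]; ring

open Equiv Equiv.Perm in
theorem stepFlow_isFlow (n : ℕ) (w : Perm (Fin n) → Perm (Fin n) → ℚ) (hw : IsFlow n w) :
    IsFlow (n + 1) (fun x y => stepFlow n w (decomposeFin x) (decomposeFin y)) := by
  constructor
  · intro x y
    have h1 := hw.nonneg (decomposeFin x).2 (decomposeFin y).2
    have h2 := alphaCoef_nonneg n _ (absLength_lt n (decomposeFin x).2)
    have h3 := rk_nonneg n (absLength (decomposeFin x).2 + 1)
    have h4 := rk_nonneg (n + 1) (absLength (decomposeFin x).2 + 1)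
    have h5 := rk_nonneg n (absLength (decomposeFin x).2)
    simp only [stepFlow]
    split_ifs <;> positivity
  · intro x y
    obtain ⟨⟨p, e⟩, rfl⟩ := decomposeFin.symm.surjective x
    obtain ⟨⟨q, e'⟩, rfl⟩ := decomposeFin.symm.surjective y
    simp only [stepFlow, prodLe, Equiv.apply_symm_apply]
    intro h
    by_cases hpq : p = q
    · subst hpq
      rw [if_pos rfl] at h
      obtain ⟨h1, h2⟩ := hw.supp _ _ (right_ne_zero_of_mul h)
      refine ⟨⟨Or.inr rfl, h1⟩, ?_⟩
      by_cases hp : p = 0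
      · subst hp; rw [absLength_zero, absLength_zero, h2]
      · rw [absLength_nonzero _ hp, absLength_nonzero _ hp, h2]
    · rw [if_neg hpq] at h
      by_cases hp : p = 0
      · subst hp
        rw [if_pos rfl] at h
        have he : e = e' := by
          by_contra hne
          rw [if_neg hne] at h
          exact h rfl
        subst he
        refine ⟨⟨Or.inl rfl, prodLe_refl _ _⟩, ?_⟩
        rw [absLength_zero, absLength_nonzero _ (Ne.symm hpq)]
      · rw [if_neg hp] at h
        exact absurd rfl h
  · intro x hx
    obtain ⟨⟨p, e⟩, rfl⟩ := decomposeFin.symm.surjective x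
    rw [← Equiv.sum_comp decomposeFin.symm, Fintype.sum_prod_type]
    simp only [Equiv.apply_symm_apply]
    by_cases hp : p = 0
    · subst hp
      rw [absLength_zero] at hx ⊢
      rw [Fin.sum_univ_succ]
      simp only [stepFlow, if_true, (Fin.succ_ne_zero _).symm, if_false, Finset.sum_ite_eq,
        Finset.mem_univ, Finset.sum_const, Finset.card_univ, Fintype.card_fin, nsmul_eq_mul,
        ← Finset.mul_sum]
      rw [← alpha_row n _ (by omega)]
      congr 1
      by_cases hk : absLength e + 1 < n
      · rw [hw.row e hk]
      · rw [rk_eq_zero n _ (by omega)]; simp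
    · rw [absLength_nonzero _ hp] at hx ⊢
      have : ∀ q, (∑ y, stepFlow n w (p, e) (q, y)) =
          if p = q then rk n (absLength e) / rk (n + 1) (absLength e + 1) * ∑ y, w e y else 0 := by
        intro q
        by_cases hq : p = q <;> simp [stepFlow, hp, hq, ← Finset.mul_sum]
        intro h; exact absurd (hq.trans h) hp
      simp only [this]
      rw [Finset.sum_ite_eq, if_pos (Finset.mem_univ _), hw.row e (by omega)]
      have h0 := rk_pos n (absLength e) (by omega)
      have h1 := rk_pos (n + 1) (absLength e + 1) (by omega)
      field_simp
  · intro y hy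
    obtain ⟨⟨q, e⟩, rfl⟩ := decomposeFin.symm.surjective y
    rw [← Equiv.sum_comp decomposeFin.symm, Fintype.sum_prod_type]
    simp only [Equiv.apply_symm_apply]
    by_cases hq : q = 0
    · subst hq
      rw [absLength_zero] at hy ⊢
      rw [Fin.sum_univ_succ]
      simp only [stepFlow, if_true, Fin.succ_ne_zero, if_false, Finset.sum_const_zero, add_zero]
      have : ∀ x, rk n (absLength x + 1) / rk (n + 1) (absLength x + 1) * w x e =
          rk n (absLength e) / rk (n + 1) (absLength e) * w x e := by
        intro x
        by_cases h : w x e = 0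
        · rw [h]; simp
        · rw [(hw.supp _ _ h).2]
      simp only [this]
      rw [← Finset.mul_sum, hw.col e hy]
      have h0 := rk_absLength_pos n e
      field_simp
    · rw [absLength_nonzero _ hq]
      have : ∀ p, (∑ x, stepFlow n w (p, x) (q, e)) =
          (if p = 0 then alphaCoef n (absLength e) else 0) + if p = q then
            ∑ x, rk n (absLength x) / rk (n + 1) (absLength x + 1) * w x e else 0 := by
        intro p
        by_cases hp : p = 0
        · subst hp
          simp [stepFlow, Ne.symm hq]
        · by_cases hpq : p = q <;> simp [stepFlow, hp, hpq, hq]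
      simp only [this]
      rw [Finset.sum_add_distrib, Finset.sum_ite_eq', Finset.sum_ite_eq',
        if_pos (Finset.mem_univ _), if_pos (Finset.mem_univ _)]
      cases hk : absLength e with
      | zero =>
        have : ∀ x, w x e = 0 := by
          intro x
          by_contra h
          have := (hw.supp _ _ h).2
          omega
        simp [this, alphaCoef]
      | succ k =>
        have : ∀ x, rk n (absLength x) / rk (n + 1) (absLength x + 1) * w x e =
            rk n k / rk (n + 1) (k + 1) * w x e := by
          intro x
          by_cases h : w x e = 0
          · rw [h]; simp
          · have := (hw.supp _ _ h).2
            have : absLength x = k := by omega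
            rw [this]
        simp only [this]
        rw [← Finset.mul_sum, hw.col e (by omega), hk, alphaCoef]
        have : rk n k / (rk n (k + 1) * rk (n + 1) (k + 1)) =
          rk n k / rk (n + 1) (k + 1) * (1 / rk n (k + 1)) := by
          rw [div_mul_div_comm, mul_one, mul_comm (rk n (k + 1))]
        rw [this]; ring

theorem exists_flow (n : ℕ) : ∃ w, IsFlow n w := by
  induction n with
  | zero =>
    refine ⟨fun _ _ => 0, fun _ _ => le_rfl, fun _ _ h => absurd rfl h, fun _ h => by omega,
      fun y h => ?_⟩
    rcases absLength_lt 0 y with h' | h' <;> omega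
  | succ n ih =>
    obtain ⟨w, hw⟩ := ih
    exact ⟨_, stepFlow_isFlow n w hw⟩

open Classical in
theorem lym_partial (n : ℕ) (A : Finset (Equiv.Perm (Fin n)))
    (hA : IsAntichain absLe (A : Set (Equiv.Perm (Fin n)))) (t : ℕ) (ht : t = 0 ∨ t < n) :
    ∑ a ∈ A with absLength a ≤ t, 1 / rk n (absLength a) ≤
      ((Finset.univ.filter fun y : Equiv.Perm (Fin n) =>
        absLength y = t ∧ ∃ a ∈ A, prodLe n a y).card : ℚ) / rk n t := by
  obtain ⟨w, hw⟩ := exists_flow n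
  induction t with
  | zero =>
    rw [Finset.sum_congr rfl (g := fun _ => 1 / rk n 0)]
    · rw [Finset.sum_const, nsmul_eq_mul, mul_one_div]
      apply div_le_div_of_nonneg_right _ (rk_nonneg _ _)
      norm_cast
      apply Finset.card_le_card
      intro a ha
      simp only [Finset.mem_filter, Finset.mem_univ, true_and] at ha ⊢
      exact ⟨by omega, a, ha.1, prodLe_refl _ _⟩
    · intro a ha
      simp only [Finset.mem_filter] at ha
      have : absLength a = 0 := by omega
      rw [this]
  | succ t ih =>
    have ht' : t + 1 < n := by omega
    have ih := ih (by omega)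
    set U := Finset.univ.filter fun y : Equiv.Perm (Fin n) =>
        absLength y = t ∧ ∃ a ∈ A, prodLe n a y with hU
    set U' := Finset.univ.filter fun y : Equiv.Perm (Fin n) =>
        absLength y = t + 1 ∧ ∃ a ∈ A, prodLe n a y with hU'
    set B := A.filter fun a => absLength a = t + 1 with hB
    have hsplit : (A.filter fun a => absLength a ≤ t + 1) =
        (A.filter fun a => absLength a ≤ t) ∪ B := by
      ext a
      simp only [hB, Finset.mem_filter, Finset.mem_union]
      constructor
      · rintro ⟨h1, h2⟩
        rcases Nat.lt_or_ge t (absLength a) with h | h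
        · right; exact ⟨h1, by omega⟩
        · left; exact ⟨h1, h⟩
      · rintro (⟨h1, h2⟩ | ⟨h1, h2⟩) <;> exact ⟨h1, by omega⟩
    have hdisj : Disjoint (A.filter fun a => absLength a ≤ t) B := by
      rw [Finset.disjoint_left]
      intro a h1 h2
      simp only [hB, Finset.mem_filter] at h1 h2
      omega
    have hBsum : ∑ a ∈ B, 1 / rk n (absLength a) = (B.card : ℚ) / rk n (t + 1) := by
      rw [Finset.sum_congr rfl (g := fun _ => 1 / rk n (t + 1))]
      · rw [Finset.sum_const, nsmul_eq_mul, mul_one_div]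
      · intro a ha
        simp only [hB, Finset.mem_filter] at ha
        rw [ha.2]
    have hBU : B ⊆ U' := by
      intro a ha
      simp only [hB, hU', Finset.mem_filter, Finset.mem_univ, true_and] at ha ⊢
      exact ⟨ha.2, a, ha.1, prodLe_refl _ _⟩
    have hUsum : (U.card : ℚ) / rk n t = ∑ x ∈ U, ∑ y, w x y := by
      rw [Finset.sum_congr rfl (g := fun _ => 1 / rk n t)]
      · rw [Finset.sum_const, nsmul_eq_mul, mul_one_div]
      · intro x hx
        simp only [hU, Finset.mem_filter, Finset.mem_univ, true_and] at hx
        rw [hw.row x (by omega), hx.1]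
    have hshadow : ∀ x ∈ U, ∀ y, w x y ≠ 0 → y ∈ U' \ B := by
      intro x hx y hxy
      obtain ⟨h1, h2⟩ := hw.supp _ _ hxy
      simp only [hU, hU', hB, Finset.mem_sdiff, Finset.mem_filter, Finset.mem_univ,
        true_and] at hx ⊢
      obtain ⟨hx1, a, haA, hax⟩ := hx
      have hay := prodLe_trans _ _ _ _ hax h1
      refine ⟨⟨by omega, a, haA, hay⟩, ?_⟩
      rintro ⟨hyA, -⟩
      have hra : absLength x = absLength a + absLength (a⁻¹ * x) := absLe_of_prodLe _ _ _ hax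
      have hne : a ≠ y := by
        rintro rfl
        omega
      exact hA haA hyA hne (absLe_of_prodLe _ _ _ hay)
    have hflow : ∑ x ∈ U, ∑ y, w x y ≤ ((U' \ B).card : ℚ) / rk n (t + 1) := by
      calc ∑ x ∈ U, ∑ y, w x y = ∑ x ∈ U, ∑ y ∈ U' \ B, w x y := by
            apply Finset.sum_congr rfl
            intro x hx
            symm
            apply Finset.sum_subset (Finset.subset_univ _)
            intro y _ hy
            by_contra h
            exact hy (hshadow x hx y h)
        _ = ∑ y ∈ U' \ B, ∑ x ∈ U, w x y := Finset.sum_comm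
        _ ≤ ∑ y ∈ U' \ B, ∑ x, w x y := by
            apply Finset.sum_le_sum
            intro y _
            exact Finset.sum_le_sum_of_subset_of_nonneg (Finset.subset_univ _)
              (fun x _ _ => hw.nonneg x y)
        _ = ∑ y ∈ U' \ B, 1 / rk n (t + 1) := by
            apply Finset.sum_congr rfl
            intro y hy
            simp only [hU', Finset.mem_sdiff, Finset.mem_filter, Finset.mem_univ,
              true_and] at hy
            rw [hw.col y (by omega), hy.1.1]
        _ = _ := by rw [Finset.sum_const, nsmul_eq_mul, mul_one_div]
    have hcard : ((U' \ B).card : ℚ) + B.card = U'.card := by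
      exact_mod_cast Finset.card_sdiff_add_card_eq_card hBU
    rw [hsplit, Finset.sum_union hdisj, hBsum, ← hcard, add_div]
    linarith

open Classical in
theorem lym (n : ℕ) (A : Finset (Equiv.Perm (Fin n)))
    (hA : IsAntichain absLe (A : Set (Equiv.Perm (Fin n)))) :
    ∑ a ∈ A, 1 / rk n (absLength a) ≤ 1 := by
  have h := lym_partial n A hA (n - 1) (by omega)
  have hf : (A.filter fun a => absLength a ≤ n - 1) = A := by
    apply Finset.filter_true_of_mem
    intro a _
    rcases absLength_lt n a with h | h <;> omega
  rw [hf] at h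
  refine h.trans (div_le_one_of_le₀ ?_ (rk_nonneg _ _))
  rw [← card_level]
  norm_cast
  apply Finset.card_le_card
  intro y hy
  simp only [Finset.mem_filter, Finset.mem_univ, true_and] at hy ⊢
  exact hy.1

/-- `S_n`, partially ordered by absolute order (equivalently, by refinement),
is Sperner: every antichain `A` satisfies `|A| ≤ max_k s(n,k)`, the largest
unsigned Stirling number of the first kind. -/
theorem symmetric_group_sperner (n : ℕ) (A : Finset (Equiv.Perm (Fin n)))
    (hA : IsAntichain absLe (A : Set (Equiv.Perm (Fin n)))) :
    A.card ≤ (Finset.range (n + 1)).sup fun k => stirlingFirst n k := by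
  set M := (Finset.range (n + 1)).sup fun k => stirlingFirst n k with hM
  have hle : ∀ a : Equiv.Perm (Fin n), rk n (absLength a) ≤ M := by
    intro a
    rw [← card_level]
    norm_cast
    have h1 : (Finset.univ.filter fun π : Equiv.Perm (Fin n) => absLength π = absLength a).card =
        stirlingFirst n (cycleCount a) := by
      unfold stirlingFirst
      congr 1
      ext π
      have h1 := cycleCount_add_absLength π
      have h2 := cycleCount_add_absLength a
      simp only [Finset.mem_filter, Finset.mem_univ, true_and]
      omega
    rw [h1]
    refine Finset.le_sup (f := fun k => stirlingFirst n k) ?_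
    have h2 := cycleCount_add_absLength a
    rw [Finset.mem_range]
    omega
  have h := lym n A hA
  have h2 : (A.card : ℚ) ≤ M := by
    calc (A.card : ℚ) = ∑ a ∈ A, (1 : ℚ) := by simp
      _ ≤ ∑ a ∈ A, (M : ℚ) * (1 / rk n (absLength a)) := by
          apply Finset.sum_le_sum
          intro a _
          rw [mul_one_div, one_le_div (rk_absLength_pos n a)]
          exact hle a
      _ = M * ∑ a ∈ A, 1 / rk n (absLength a) := by rw [Finset.mul_sum]
      _ ≤ M * 1 := mul_le_mul_of_nonneg_left h (by positivity)
      _ = M := mul_one _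
  exact_mod_cast h2
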